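/- arXiv:2010.10559 — 2 statements merged into one kernel-verified Lean document; each statement's English description precedes it below -/
import Mathlib

section
/- (Global convergence for the (1D1B) setup with small desired distance.) Let p₁, p₂ : ℝ → ℝ² be differentiable curves with p₁(t) ≠ p₂(t) for all t ≥ 0, satisfying for all t ≥ 0 the closed-loop equations ṗ₁(t) = K_d·e₁₂d(t)·z₁₂(t) and ṗ₂(t) = −K_b·(g₁₂(t) − g₁₂*). If d₁₂* < √3·(K_b/K_d)^(1/3), then there exists a point q₁ ∈ ℝ² such that p₁(t) → q₁ and p₂(t) → q₁ + d₁₂*·g₁₂* as t → ∞. -/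
theorem aux_anti (f f' : ℝ → ℝ) (T : ℝ) (hf : ∀ t, T ≤ t → HasDerivAt f (f' t) t)
    (h : ∀ t, T ≤ t → f' t ≤ 0) : ∀ s t, T ≤ s → s ≤ t → f t ≤ f s := by
  intro s t hs hst
  have : AntitoneOn f (Set.Ici T) := by
    apply antitoneOn_of_deriv_nonpos (convex_Ici T)
    · intro x hx
      exact (hf x hx).continuousAt.continuousWithinAt
    · intro x hx
      rw [interior_Ici] at hx
      exact (hf x (le_of_lt hx)).differentiableAt.differentiableWithinAt
    · intro x hx
      rw [interior_Ici] at hx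
      rw [(hf x (le_of_lt hx)).deriv]
      exact h x (le_of_lt hx)
  exact this (Set.mem_Ici.2 hs) (Set.mem_Ici.2 (hs.trans hst)) hst

theorem aux_exp (f f' : ℝ → ℝ) (T l : ℝ) (hf : ∀ t, T ≤ t → HasDerivAt f (f' t) t)
    (h : ∀ t, T ≤ t → f' t ≤ -l * f t) :
    ∀ t, T ≤ t → f t ≤ (f T * Real.exp (l * T)) * Real.exp (-l * t) := by
  intro t ht
  have hd : ∀ t, T ≤ t → HasDerivAt (fun t => f t * Real.exp (l * t))
      (f' t * Real.exp (l * t) + f t * (Real.exp (l * t) * (l * 1))) t := by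
    intro t ht
    exact (hf t ht).mul (((hasDerivAt_id t).const_mul l).exp)
  have := aux_anti _ _ T hd (by
    intro t ht
    have h1 := h t ht
    have h2 := Real.exp_pos (l * t)
    nlinarith) T t le_rfl ht
  have h3 : f t = (f t * Real.exp (l * t)) * Real.exp (-l * t) := by
    rw [mul_assoc, ← Real.exp_add]; simp
  rw [h3]
  exact mul_le_mul_of_nonneg_right this (Real.exp_pos _).le

theorem aux_barrier (f f' : ℝ → ℝ) (T M : ℝ) (hf : ∀ t, T ≤ t → HasDerivAt f (f' t) t)
    (h0 : f T ≤ M) (h : ∀ t, T ≤ t → M ≤ f t → f' t ≤ 0) : ∀ t, T ≤ t → f t ≤ M := by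
  intro t ht
  have key : ∀ e : ℝ, 0 < e → f t ≤ M + e * (t - T) := by
    intro e he
    refine image_le_of_deriv_right_lt_deriv_boundary (f := f) (f' := f') (a := T) (b := t)
      (B := fun s => M + e * (s - T)) (B' := fun _ => e) ?_ ?_ ?_ ?_ ?_ ⟨ht, le_rfl⟩
    · intro x hx
      exact (hf x hx.1).continuousAt.continuousWithinAt
    · intro x hx
      exact (hf x hx.1).hasDerivWithinAt
    · simpa using h0
    · intro x
      simpa using (((hasDerivAt_id x).sub_const T).const_mul e).const_add M
    · intro x hx hx2
      have : f' x ≤ 0 := h x hx.1 (by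
        rw [hx2]
        have : 0 ≤ e * (x - T) := mul_nonneg he.le (by linarith [hx.1])
        linarith)
      linarith
  by_contra hc
  push Not at hc
  have hp : 0 < t - T + 1 := by linarith
  have := key ((f t - M) / (t - T + 1)) (div_pos (by linarith) hp)
  have h2 : (f t - M) / (t - T + 1) * (t - T) < f t - M := by
    rw [div_mul_eq_mul_div, div_lt_iff₀ hp]
    nlinarith
  linarith

theorem aux_scalar (Kd Kb a : ℝ) (hKd : 0 < Kd) (hKb : 0 < Kb) (ha : 0 < a)
    (s : ℝ) (hs : 0 < s) (hsa : a ^ 2 = 3 * s ^ 2) (hs3 : Kd * s ^ 3 < Kb)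
    (d c : ℝ → ℝ) (hdp : ∀ t, 0 ≤ t → 0 < d t)
    (hc1 : ∀ t, 0 ≤ t → c t ≤ 1) (hc2 : ∀ t, 0 ≤ t → -1 ≤ c t)
    (hd : ∀ t, 0 ≤ t → HasDerivAt d (-Kb * (1 - c t) - Kd * (d t ^ 2 - a ^ 2) * d t) t)
    (hc : ∀ t, 0 ≤ t → HasDerivAt c (Kb / d t * (1 - c t ^ 2)) t) :
    ∃ D C l T : ℝ, 0 < l ∧ 0 ≤ T ∧ 0 ≤ D ∧ (∀ t, 0 ≤ t → d t ≤ D) ∧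
      (∀ t, T ≤ t → (d t - a) ^ 2 ≤ C * Real.exp (-l * t)) ∧
      (∀ t, T ≤ t → 1 - c t ≤ C * Real.exp (-l * t)) := by
  -- upper bound on d
  obtain ⟨D, hD0, hD, haD⟩ : ∃ D, 0 < D ∧ (∀ t, 0 ≤ t → d t ≤ D) ∧ a ≤ D := by
    refine ⟨max (d 0) a, lt_max_of_lt_right ha, ?_, le_max_right _ _⟩
    apply aux_barrier d _ 0 _ hd (le_max_left _ _)
    intro t ht h
    have h1 : a ≤ d t := (le_max_right _ _).trans h
    have h2 : 0 ≤ Kb * (1 - c t) := mul_nonneg hKb.le (by linarith [hc1 t ht])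
    have h3 : 0 ≤ Kd * (d t ^ 2 - a ^ 2) * d t :=
      mul_nonneg (mul_nonneg hKd.le (by nlinarith)) (hdp t ht).le
    linarith
  -- c somewhere > -1
  obtain ⟨T0, hT0, hcT0⟩ : ∃ T0, 0 ≤ T0 ∧ -1 < c T0 := by
    by_contra hcon
    push Not at hcon
    have hceq : ∀ t, 0 ≤ t → c t = -1 := fun t ht => le_antisymm (hcon t ht) (hc2 t ht)
    set e := 2 * (Kb - Kd * s ^ 3) with he
    have hepos : 0 < e := by linarith
    have hd2 : ∀ t, 0 ≤ t → HasDerivAt (fun t => d t + e * t)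
        ((-Kb * (1 - c t) - Kd * (d t ^ 2 - a ^ 2) * d t) + e * 1) t := fun t ht =>
      (hd t ht).add ((hasDerivAt_id t).const_mul e)
    have := aux_anti _ _ 0 hd2 (by
      intro t ht
      rw [hceq t ht, hsa, he]
      have h1 : 0 ≤ Kd * ((d t - s) ^ 2 * (d t + 2 * s)) :=
        mul_nonneg hKd.le (mul_nonneg (sq_nonneg _) (by linarith [hdp t ht]))
      nlinarith) 0 (d 0 / e) le_rfl (div_nonneg (hdp 0 le_rfl).le hepos.le)
    have h2 := hdp (d 0 / e) (div_nonneg (hdp 0 le_rfl).le hepos.le)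
    have h3 : e * (d 0 / e) = d 0 := by field_simp
    rw [h3] at this
    linarith
  have hu : ∀ t, 0 ≤ t → HasDerivAt (fun t => 1 - c t) (-(Kb / d t * (1 - c t ^ 2))) t :=
    fun t ht => (hc t ht).const_sub 1
  have hmono : ∀ t, T0 ≤ t → c T0 ≤ c t := by
    intro t ht
    have := aux_anti _ _ 0 hu (by
      intro t ht
      have h1 : 0 ≤ Kb / d t * (1 - c t ^ 2) :=
        mul_nonneg (div_pos hKb (hdp t ht)).le (by nlinarith [hc1 t ht, hc2 t ht])
      linarith) T0 t hT0 ht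
    linarith
  set q := Kb / D * (1 + c T0) with hq
  have hqpos : 0 < q := mul_pos (div_pos hKb hD0) (by linarith)
  have hu' : ∀ t, T0 ≤ t → -(Kb / d t * (1 - c t ^ 2)) ≤ -q * (1 - c t) := by
    intro t ht
    have ht0 := hT0.trans ht
    have h1 : Kb / D ≤ Kb / d t := div_le_div_of_nonneg_left hKb.le (hdp t ht0) (hD t ht0)
    have h2 : q ≤ Kb / d t * (1 + c t) :=
      mul_le_mul h1 (by linarith [hmono t ht]) (by linarith) (div_pos hKb (hdp t ht0)).le
    have h3 := mul_le_mul_of_nonneg_right h2 (show 0 ≤ 1 - c t by linarith [hc1 t ht0])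
    nlinarith
  have huexp := aux_exp (fun t => 1 - c t) _ T0 q (fun t ht => hu t (hT0.trans ht)) hu'
  -- time T with c ≥ 1/2
  obtain ⟨T, hTT0, hcT⟩ : ∃ T, T0 ≤ T ∧ ∀ t, T ≤ t → 1 / 2 ≤ c t := by
    have hlim : Filter.Tendsto (fun t => ((1 - c T0) * Real.exp (q * T0)) * Real.exp (-q * t))
        Filter.atTop (nhds 0) := by
      have : Filter.Tendsto (fun t : ℝ => Real.exp (-q * t)) Filter.atTop (nhds 0) := by
        apply Real.tendsto_exp_atBot.comp
        exact Filter.tendsto_id.const_mul_atTop_of_neg (by linarith)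
      simpa using this.const_mul ((1 - c T0) * Real.exp (q * T0))
    have hev := (hlim.eventually (gt_mem_nhds (show (0:ℝ) < 1/2 by norm_num)))
    obtain ⟨T, hT⟩ := Filter.eventually_atTop.1 hev
    refine ⟨max T0 T, le_max_left _ _, fun t ht => ?_⟩
    have h1 := huexp t ((le_max_left _ _).trans ht)
    have h2 := hT t ((le_max_right _ _).trans ht)
    linarith
  have hT : 0 ≤ T := hT0.trans hTT0
  -- lower bound on d
  obtain ⟨m, hm, hmd⟩ : ∃ m, 0 < m ∧ ∀ t, T ≤ t → m ≤ d t := by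
    have hx : ∀ t, T ≤ t → HasDerivAt (fun t => -(d t * c t))
        (-((-Kb * (1 - c t) - Kd * (d t ^ 2 - a ^ 2) * d t) * c t
          + d t * (Kb / d t * (1 - c t ^ 2)))) t := fun t ht =>
      ((hd t (hT.trans ht)).mul (hc t (hT.trans ht))).neg
    have hdT := hdp T hT
    have hcT' := hcT T le_rfl
    have hxT : 0 < d T * c T := mul_pos hdT (by linarith)
    refine ⟨min (d T * c T) (a / 2), lt_min hxT (by linarith), fun t ht => ?_⟩
    have := aux_barrier _ _ T (-(min (d T * c T) (a / 2))) hx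
      (neg_le_neg (min_le_left _ _)) (by
      intro t ht h
      have ht0 := hT.trans ht
      have h1 : d t * c t ≤ a / 2 := by
        have := min_le_right (d T * c T) (a / 2)
        linarith
      have hct := hcT t ht
      have hdt := hdp t ht0
      have h2 : d t ≤ a := by nlinarith
      have h3 : d t * (Kb / d t * (1 - c t ^ 2)) = Kb * (1 - c t ^ 2) := by field_simp
      rw [h3]
      have h4 : 0 ≤ Kb * (1 - c t) := mul_nonneg hKb.le (by linarith [hc1 t ht0])
      have h5 : 0 ≤ Kd * (a ^ 2 - d t ^ 2) * d t * c t :=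
        mul_nonneg (mul_nonneg (mul_nonneg hKd.le (by nlinarith)) hdt.le) (by linarith)
      nlinarith) t ht
    have h6 := hc1 t (hT.trans ht)
    have h7 := hdp t (hT.trans ht)
    nlinarith
  -- Lyapunov function
  set k := Kd * m * a with hk
  have hkpos : 0 < k := by positivity
  set A := 4 * Kb * D / q with hA
  have hApos : 0 < A := by positivity
  have hAq : A * q = 4 * Kb * D := by rw [hA]; field_simp
  set l := min (2 * k) (q / 2) with hl
  have hlpos : 0 < l := lt_min (by linarith) (by linarith)
  have hl1 : l ≤ 2 * k := min_le_left _ _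
  have hl2 : l ≤ q / 2 := min_le_right _ _
  have hW : ∀ t, T ≤ t → HasDerivAt (fun t => (d t - a) ^ 2 + A * (1 - c t))
      (2 * (d t - a) * (-Kb * (1 - c t) - Kd * (d t ^ 2 - a ^ 2) * d t)
        + A * -(Kb / d t * (1 - c t ^ 2))) t := by
    intro t ht
    have h1 := ((hd t (hT.trans ht)).sub_const a).pow 2
    have h2 := h1.add ((hu t (hT.trans ht)).const_mul A)
    refine h2.congr_deriv ?_
    simp
  have hWexp := aux_exp _ _ T l hW (by
    intro t ht
    have ht0 := hT.trans ht
    have hu0 : 0 ≤ 1 - c t := by linarith [hc1 t ht0]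
    have h1 := mul_le_mul_of_nonneg_left (hu' t (hTT0.trans ht)) hApos.le
    have h2 : k ≤ Kd * d t * (d t + a) := by
      have e1 := hmd t ht
      have : m * a ≤ d t * (d t + a) :=
        mul_le_mul e1 (by linarith) ha.le (by linarith)
      rw [hk]
      nlinarith
    have h3 := mul_le_mul_of_nonneg_right h2 (sq_nonneg (d t - a))
    have h4 : -(d t - a) ≤ D := by linarith [hdp t ht0]
    have h5 : -(d t - a) * (Kb * (1 - c t)) ≤ D * (Kb * (1 - c t)) :=
      mul_le_mul_of_nonneg_right h4 (mul_nonneg hKb.le hu0)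
    have h6 := mul_le_mul_of_nonneg_right hl1 (sq_nonneg (d t - a))
    have h7 := mul_le_mul_of_nonneg_right hl2 (mul_nonneg hApos.le hu0)
    have h8 : A * (-q * (1 - c t)) = - (4 * Kb * D) * (1 - c t) := by rw [← hAq]; ring
    have h9 : q / 2 * (A * (1 - c t)) = (2 * Kb * D) * (1 - c t) := by
      linear_combination (1 - c t) / 2 * hAq
    rw [h8] at h1
    rw [h9] at h7
    nlinarith)
  set C := ((d T - a) ^ 2 + A * (1 - c T)) * Real.exp (l * T) with hC
  have hC0 : 0 ≤ C := mul_nonneg (add_nonneg (sq_nonneg _)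
    (mul_nonneg hApos.le (by linarith [hc1 T hT]))) (Real.exp_pos _).le
  refine ⟨D, max C (C / A), l, T, hlpos, hT, hD0.le, hD, ?_, ?_⟩
  · intro t ht
    have h1 := hWexp t ht
    have h2 : 0 ≤ A * (1 - c t) := mul_nonneg hApos.le (by linarith [hc1 t (hT.trans ht)])
    have h3 := mul_le_mul_of_nonneg_right (le_max_left C (C / A)) (Real.exp_pos (-l * t)).le
    linarith
  · intro t ht
    have h1 := hWexp t ht
    have h3 := mul_le_mul_of_nonneg_right (le_max_right C (C / A)) (Real.exp_pos (-l * t)).le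
    refine le_trans ?_ h3
    rw [div_mul_eq_mul_div, le_div_iff₀ hApos]
    have h4 := sq_nonneg (d t - a)
    have h5 : (d t - a) ^ 2 + A * (1 - c t) ≤ C * Real.exp (-l * t) := h1
    linarith

/-- global convergence for the (1D1B) setup when
`d₁₂* < √3·(K_b/K_d)^(1/3)` (no moving configurations exist). -/
theorem stmt_7 (Kd Kb dstar : ℝ) (hKd : 0 < Kd) (hKb : 0 < Kb) (hdstar : 0 < dstar)
    (gstar : EuclideanSpace ℝ (Fin 2)) (hgstar : ‖gstar‖ = 1)
    (p₁ p₂ : ℝ → EuclideanSpace ℝ (Fin 2))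
    (hsep : ∀ t : ℝ, 0 ≤ t → p₁ t ≠ p₂ t)
    (hp₁ : ∀ t : ℝ, 0 ≤ t →
      HasDerivAt p₁ ((Kd * (‖p₂ t - p₁ t‖ ^ 2 - dstar ^ 2)) • (p₂ t - p₁ t)) t)
    (hp₂ : ∀ t : ℝ, 0 ≤ t →
      HasDerivAt p₂ ((-Kb) • (‖p₂ t - p₁ t‖⁻¹ • (p₂ t - p₁ t) - gstar)) t)
    (hthr : dstar < Real.sqrt 3 * (Kb / Kd) ^ ((1 : ℝ) / 3)) :
    ∃ q₁ : EuclideanSpace ℝ (Fin 2),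
      Filter.Tendsto p₁ Filter.atTop (nhds q₁) ∧
      Filter.Tendsto p₂ Filter.atTop (nhds (q₁ + dstar • gstar)) := by
  set z : ℝ → EuclideanSpace ℝ (Fin 2) := fun t => p₂ t - p₁ t with hz
  set d : ℝ → ℝ := fun t => ‖z t‖ with hdd
  set X : ℝ → ℝ := fun t => inner ℝ gstar (z t) with hX
  have hdp : ∀ t, 0 ≤ t → 0 < d t := fun t ht =>
    norm_pos_iff.2 (sub_ne_zero.2 (hsep t ht).symm)
  have hzd : ∀ t, 0 ≤ t → HasDerivAt z ((-Kb) • ((d t)⁻¹ • z t - gstar)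
      - (Kd * (d t ^ 2 - dstar ^ 2)) • z t) t := fun t ht => (hp₂ t ht).sub (hp₁ t ht)
  have hXd : ∀ t, 0 ≤ t → HasDerivAt X (Kb * (1 - X t / d t)
      - Kd * (d t ^ 2 - dstar ^ 2) * X t) t := by
    intro t ht
    have h1 := (hasDerivAt_const t gstar).inner ℝ (hzd t ht)
    refine h1.congr_deriv ?_
    simp only [inner_sub_right, inner_smul_right, inner_zero_left, real_inner_self_eq_norm_sq,
      hgstar]
    have : inner ℝ gstar (z t) = X t := rfl
    rw [this]
    ring
  have hd : ∀ t, 0 ≤ t → HasDerivAt d (-Kb * (1 - X t / d t)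
      - Kd * (d t ^ 2 - dstar ^ 2) * d t) t := by
    intro t ht
    have hpos := hdp t ht
    have h1 := (hzd t ht).norm_sq
    have h2 := h1.sqrt (by have := hdp t ht; positivity)
    have h3 : (fun y => √(‖z y‖ ^ 2)) = d := by
      funext y; exact Real.sqrt_sq (norm_nonneg _)
    rw [h3] at h2
    refine h2.congr_deriv ?_
    have h4 : √(‖z t‖ ^ 2) = d t := Real.sqrt_sq (norm_nonneg _)
    rw [h4]
    simp only [inner_sub_right, inner_smul_right, real_inner_self_eq_norm_sq]
    have h5 : inner ℝ (z t) gstar = X t := real_inner_comm _ _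
    have h6 : ‖z t‖ = d t := rfl
    rw [h5, h6]
    field_simp
  have hXabs : ∀ t, |X t| ≤ d t := by
    intro t
    have := abs_real_inner_le_norm gstar (z t)
    rwa [hgstar, one_mul] at this
  have hc : ∀ t, 0 ≤ t → HasDerivAt (fun t => X t / d t)
      (Kb / d t * (1 - (X t / d t) ^ 2)) t := by
    intro t ht
    have hpos := hdp t ht
    refine ((hXd t ht).div (hd t ht) hpos.ne').congr_deriv ?_
    field_simp
    ring
  have hs3 : √3 ^ 2 = (3:ℝ) := Real.sq_sqrt (by norm_num)
  have hs3p : 0 < √(3:ℝ) := by positivity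
  obtain ⟨D, C, l, T, hl, hT, hD0, hD, hw, hu⟩ := aux_scalar Kd Kb dstar hKd hKb hdstar
    (dstar / √3) (by positivity) (by rw [div_pow, hs3]; ring) (by
      have h1 : dstar / √3 < (Kb / Kd) ^ ((1 : ℝ) / 3) := by
        rw [div_lt_iff₀ hs3p]; linarith
      have h2 : (dstar / √3) ^ 3 < ((Kb / Kd) ^ ((1 : ℝ) / 3)) ^ 3 :=
        pow_lt_pow_left₀ h1 (by positivity) (by norm_num)
      rw [← Real.rpow_natCast ((Kb / Kd) ^ ((1 : ℝ) / 3)), ← Real.rpow_mul (by positivity)] at h2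
      norm_num at h2
      rw [lt_div_iff₀ hKd] at h2
      linarith) d (fun t => X t / d t) hdp
    (fun t ht => by
      rw [div_le_one (hdp t ht)]; exact (abs_le.1 (hXabs t)).2)
    (fun t ht => by
      rw [le_div_iff₀ (hdp t ht)]; linarith [(abs_le.1 (hXabs t)).1])
    hd hc
  have hexp : Filter.Tendsto (fun t : ℝ => C * Real.exp (-l * t)) Filter.atTop (nhds 0) := by
    have : Filter.Tendsto (fun t : ℝ => Real.exp (-l * t)) Filter.atTop (nhds 0) := by
      apply Real.tendsto_exp_atBot.comp
      exact Filter.tendsto_id.const_mul_atTop_of_neg (by linarith)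
    simpa using this.const_mul C
  -- z converges
  have hzlim : Filter.Tendsto z Filter.atTop (nhds (dstar • gstar)) := by
    rw [tendsto_iff_norm_sub_tendsto_zero]
    have hsq : Filter.Tendsto (fun t => ‖z t - dstar • gstar‖ ^ 2) Filter.atTop (nhds 0) := by
      have hub := hexp.mul_const (1 + 2 * D * dstar)
      rw [zero_mul] at hub
      refine tendsto_of_tendsto_of_tendsto_of_le_of_le' tendsto_const_nhds hub
        (Filter.Eventually.of_forall fun t => by positivity) ?_
      filter_upwards [Filter.eventually_ge_atTop T] with t ht
      have ht0 := hT.trans ht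
      have hpos := hdp t ht0
      have h1 : ‖z t - dstar • gstar‖ ^ 2
          = (d t - dstar) ^ 2 + 2 * d t * dstar * (1 - X t / d t) := by
        rw [norm_sub_sq_real, inner_smul_right, norm_smul, hgstar, real_inner_comm]
        change d t ^ 2 - 2 * (dstar * X t) + (‖dstar‖ * 1) ^ 2 = _
        rw [mul_one, Real.norm_eq_abs, sq_abs]
        field_simp
        ring
      have h2 : 0 ≤ 1 - X t / d t := by
        rw [sub_nonneg, div_le_one hpos]; exact (abs_le.1 (hXabs t)).2
      have h3 : 2 * d t * dstar * (1 - X t / d t) ≤ 2 * D * dstar * (C * Real.exp (-l * t)) :=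
        mul_le_mul (by have := hD t ht0; gcongr) (hu t ht) h2 (by positivity)
      have h4 := hw t ht
      rw [h1]
      linarith
    have := hsq.sqrt
    simpa [Real.sqrt_sq] using this
  -- p₁ converges
  have hint : MeasureTheory.IntegrableOn
      (fun t => (Kd * (d t ^ 2 - dstar ^ 2)) • z t) (Set.Ioi T) := by
    have hcz : ContinuousOn z (Set.Ioi T) := fun t ht =>
      (hzd t (hT.trans (le_of_lt ht))).continuousAt.continuousWithinAt
    have hcont : ContinuousOn (fun t => (Kd * (d t ^ 2 - dstar ^ 2)) • z t) (Set.Ioi T) := by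
      have : ContinuousOn d (Set.Ioi T) := hcz.norm
      fun_prop
    have hb : MeasureTheory.IntegrableOn
        (fun t => (Kd * (D + dstar) * D * √C) * Real.exp (-(l / 2) * t)) (Set.Ioi T) :=
      (exp_neg_integrableOn_Ioi T (by linarith)).const_mul _
    refine MeasureTheory.Integrable.mono' hb
      (hcont.aestronglyMeasurable measurableSet_Ioi) ?_
    refine (MeasureTheory.ae_restrict_iff' measurableSet_Ioi).2 (Filter.Eventually.of_forall ?_)
    intro t ht
    have ht1 : T ≤ t := le_of_lt ht
    have ht0 := hT.trans ht1
    have hpos := hdp t ht0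
    have h1 : |d t - dstar| ≤ √C * Real.exp (-(l / 2) * t) := by
      have e1 := Real.sqrt_le_sqrt (hw t ht1)
      rw [Real.sqrt_sq_eq_abs, Real.sqrt_mul' _ (Real.exp_pos _).le] at e1
      have e2 : √(Real.exp (-l * t)) = Real.exp (-(l / 2) * t) := by
        rw [Real.sqrt_eq_iff_mul_self_eq (Real.exp_pos _).le (Real.exp_pos _).le,
          ← Real.exp_add]
        ring_nf
      rwa [e2] at e1
    rw [norm_smul, Real.norm_eq_abs, abs_mul, abs_of_pos hKd,
      show d t ^ 2 - dstar ^ 2 = (d t + dstar) * (d t - dstar) by ring, abs_mul,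
      abs_of_pos (show 0 < d t + dstar by linarith)]
    change Kd * ((d t + dstar) * |d t - dstar|) * d t ≤ _
    have h2 := hD t ht0
    calc Kd * ((d t + dstar) * |d t - dstar|) * d t
        ≤ Kd * ((D + dstar) * (√C * Real.exp (-(l / 2) * t))) * D := by gcongr
      _ = _ := by ring
  have hp1lim := MeasureTheory.tendsto_limUnder_of_hasDerivAt_of_integrableOn_Ioi
    (f := p₁) (a := T) (fun t ht => hp₁ t (hT.trans (le_of_lt ht))) hint
  refine ⟨_, hp1lim, ?_⟩
  have := hp1lim.add hzlim
  refine this.congr fun t => ?_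
  simp [hz]
end

section
/- (Local asymptotic convergence for the (1D2B) setup.) Assume d₁₂* ≥ d̂ and d₁₃* ≥ d̂ where d̂ = √3·(K_b/(2K_d))^(1/3), and g₁₂* ≠ ±g₁₃*. Then there exists δ > 0 such that for every solution p₁, p₂, p₃ : ℝ → ℝ² of the closed-loop (1D2B) dynamics (differentiable curves with p₁(t) ≠ p₂(t), p₁(t) ≠ p₃(t) for all t ≥ 0, satisfying ṗ₁ = K_d·e₁₂d·z₁₂ + K_d·e₁₃d·z₁₃, ṗ₂ = −K_b·e₁₂b, ṗ₃ = −K_b·e₁₃b) whose initial links satisfy ‖z₁₂(0) − d₁₂*·g₁₂*‖ < δ and ‖z₁₃(0) − d₁₃*·g₁₃*‖ < δ, there exist points q₁, q₂, q₃ ∈ ℝ² with q₂ − q₁ = d₁₂*·g₁₂* and q₃ − q₁ = d₁₃*·g₁₃* such that pᵢ(t) → qᵢ as t → ∞ for i = 1, 2, 3. -/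
open Filter Topology

lemma aux_decay (W W' : ℝ → ℝ) (r l : ℝ) (hr : 0 < r) (hl : 0 < l)
    (hW : ∀ t, 0 ≤ t → HasDerivAt W (W' t) t) (h0 : W 0 ≤ r)
    (hd : ∀ t, 0 ≤ t → W t ≤ r → W' t ≤ -(2 * l) * W t) :
    ∀ t, 0 ≤ t → W t ≤ r * Real.exp (-l * t) := by
  intro t ht
  have hB : ∀ x : ℝ, HasDerivAt (fun x => r * Real.exp (-l * x))
      (r * (Real.exp (-l * x) * (-l))) x := by
    intro x
    have h1 : HasDerivAt (fun x : ℝ => -l * x) (-l) x := by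
      simpa using (hasDerivAt_id x).const_mul (-l)
    exact (h1.exp).const_mul r
  refine image_le_of_deriv_right_lt_deriv_boundary (f := W) (f' := W') (a := 0) (b := t)
    (fun x hx => (hW x hx.1).continuousAt.continuousWithinAt)
    (fun x hx => (hW x hx.1).hasDerivWithinAt) (by simpa using h0) hB ?_ ⟨ht, le_refl t⟩
  intro x hx hxe
  have hpos : 0 < r * Real.exp (-l * x) := by positivity
  have hle : W x ≤ r := by
    rw [hxe]
    have : Real.exp (-l * x) ≤ 1 := Real.exp_le_one_iff.2 (by nlinarith [hx.1])
    nlinarith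
  have := hd x hx.1 hle
  rw [hxe] at this
  nlinarith

section
variable {E : Type*} [NormedAddCommGroup E] [InnerProductSpace ℝ E]

lemma aux_G (K d : ℝ) (g : E) (hg : ‖g‖ = 1) (η : ℝ) (hη : 0 < η) :
    ∃ ρ > 0, ∀ u : E, ‖u‖ < ρ →
      ‖(K * (‖d • g + u‖ ^ 2 - d ^ 2)) • (d • g + u) - (2 * K * d ^ 2 * inner ℝ g u) • g‖
        ≤ η * ‖u‖ := by
  have h1 : HasFDerivAt (fun z : E => ‖z‖ ^ 2) (2 • innerSL ℝ (d • g)) (d • g) :=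
    (hasStrictFDerivAt_norm_sq (d • g)).hasFDerivAt
  have h2 := ((h1.sub_const (d ^ 2)).const_mul K).smul (hasFDerivAt_id (d • g))
  have h3 := (hasFDerivAt_iff_isLittleO_nhds_zero.1 h2).def hη
  obtain ⟨ρ, hρ, h⟩ := Metric.eventually_nhds_iff.1 h3
  refine ⟨ρ, hρ, fun u hu => ?_⟩
  have := h (y := u) (by simpa using hu)
  convert this using 2
  simp [norm_smul, hg, smul_smul]
  congr 1
  ring

lemma aux_F (K d : ℝ) (hd : 0 < d) (g : E) (hg : ‖g‖ = 1) (η : ℝ) (hη : 0 < η) :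
    ∃ ρ > 0, ∀ u : E, ‖u‖ < ρ →
      ‖K • (‖d • g + u‖⁻¹ • (d • g + u) - g) - (K / d) • (u - (inner ℝ g u) • g)‖
        ≤ η * ‖u‖ := by
  have hn : ‖d • g‖ = d := by rw [norm_smul, hg, mul_one, Real.norm_of_nonneg hd.le]
  have h1 : HasFDerivAt (fun z : E => ‖z‖ ^ 2) (2 • innerSL ℝ (d • g)) (d • g) :=
    (hasStrictFDerivAt_norm_sq (d • g)).hasFDerivAt
  have hne : ‖d • g‖ ^ 2 ≠ 0 := by rw [hn]; positivity
  have h1' := h1.sqrt hne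
  simp only [Real.sqrt_sq (norm_nonneg _)] at h1'
  have h1'' := (hasDerivAt_inv (x := ‖d • g‖) (by rw [hn]; positivity)).comp_hasFDerivAt (d • g) h1'
  have h2 := ((h1''.smul (hasFDerivAt_id (d • g))).sub_const g).const_smul K
  have h3 := (hasFDerivAt_iff_isLittleO_nhds_zero.1 h2).def hη
  obtain ⟨ρ, hρ, h⟩ := Metric.eventually_nhds_iff.1 h3
  refine ⟨ρ, hρ, fun u hu => ?_⟩
  have := h (y := u) (by simpa using hu)
  convert this using 2
  simp [hn, smul_smul]
  rw [inv_mul_cancel₀ hd.ne']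
  simp only [one_smul, sub_self, smul_zero, sub_zero]
  congr 1
  rw [smul_sub, smul_smul, sub_eq_add_neg]
  congr 3
  field_simp


lemma aux_c (g2 g3 : E) (hg2 : ‖g2‖ = 1) (hg3 : ‖g3‖ = 1) (hne : g2 ≠ g3) (hne' : g2 ≠ -g3) :
    |inner ℝ g2 g3| < 1 := by
  rw [abs_lt]
  constructor
  · have := (inner_lt_one_iff_real_of_norm_eq_one hg2 (by simpa using hg3)).2 hne'
    rw [inner_neg_right] at this
    linarith
  · exact (inner_lt_one_iff_real_of_norm_eq_one hg2 hg3).2 hne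

set_option maxHeartbeats 1000000 in
lemma aux_lyap (a2 a3 b2 b3 : ℝ) (ha2 : 0 < a2) (ha3 : 0 < a3) (hb2 : 0 < b2) (hb3 : 0 < b3)
    (g2 g3 : E) (hg2 : ‖g2‖ = 1) (hg3 : ‖g3‖ = 1) (hne : g2 ≠ g3) (hne' : g2 ≠ -g3) :
    ∃ ε l η : ℝ, 0 < ε ∧ 0 < l ∧ 0 < η ∧ ∀ u2 u3 v2 v3 : E,
      ‖v2 + b2 • (u2 - (inner ℝ g2 u2) • g2) + (a2 * inner ℝ g2 u2) • g2
        + (a3 * inner ℝ g3 u3) • g3‖ ≤ 2 * η * (‖u2‖ + ‖u3‖) →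
      ‖v3 + b3 • (u3 - (inner ℝ g3 u3) • g3) + (a2 * inner ℝ g2 u2) • g2
        + (a3 * inner ℝ g3 u3) • g3‖ ≤ 2 * η * (‖u2‖ + ‖u3‖) →
      a2 * (inner ℝ g2 u2 * inner ℝ g2 v2) + a3 * (inner ℝ g3 u3 * inner ℝ g3 v3)
        + ε * (inner ℝ u2 v2 + inner ℝ u3 v3) ≤ - l * (‖u2‖ ^ 2 + ‖u3‖ ^ 2) := by
  have hc := aux_c g2 g3 hg2 hg3 hne hne'
  set c := (inner ℝ g2 g3 : ℝ) with hcdef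
  have hc' : 0 < 1 - |c| := by linarith
  obtain ⟨ε, hε, hε2, hε3⟩ : ∃ ε : ℝ, 0 < ε ∧ ε * (b2 + a2 ^ 2 / (2 * b3)) ≤ (1 - |c|) * a2 ^ 2 ∧
      ε * (b3 + a3 ^ 2 / (2 * b2)) ≤ (1 - |c|) * a3 ^ 2 := by
    refine ⟨min ((1 - |c|) * a2 ^ 2 / (b2 + a2 ^ 2 / (2 * b3)))
      ((1 - |c|) * a3 ^ 2 / (b3 + a3 ^ 2 / (2 * b2))), ?_, ?_, ?_⟩
    · apply lt_min <;> positivity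
    · rw [← le_div_iff₀ (by positivity)]; exact min_le_left _ _
    · rw [← le_div_iff₀ (by positivity)]; exact min_le_right _ _
  obtain ⟨β, hβ, hβ2, hβ3⟩ : ∃ β : ℝ, 0 < β ∧ β ≤ b2 / 2 ∧ β ≤ b3 / 2 :=
    ⟨min (b2 / 2) (b3 / 2), by positivity, min_le_left _ _, min_le_right _ _⟩
  have hM : 0 < a2 + a3 + ε := by positivity
  refine ⟨ε, ε * β / 2, ε * β / (8 * (a2 + a3 + ε)), hε, by positivity, by positivity, ?_⟩
  intro u2 u3 v2 v3 h2 h3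
  set η := ε * β / (8 * (a2 + a3 + ε)) with hηdef
  have hη : 8 * (a2 + a3 + ε) * η = ε * β := by rw [hηdef]; field_simp
  have hη0 : 0 < η := by positivity
  set w2 := v2 + b2 • (u2 - (inner ℝ g2 u2) • g2) + (a2 * inner ℝ g2 u2) • g2
        + (a3 * inner ℝ g3 u3) • g3 with hw2
  set w3 := v3 + b3 • (u3 - (inner ℝ g3 u3) • g3) + (a2 * inner ℝ g2 u2) • g2
        + (a3 * inner ℝ g3 u3) • g3 with hw3
  have hgg2 : (inner ℝ g2 g2 : ℝ) = 1 := by rw [real_inner_self_eq_norm_sq, hg2]; norm_num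
  have hgg3 : (inner ℝ g3 g3 : ℝ) = 1 := by rw [real_inner_self_eq_norm_sq, hg3]; norm_num
  have hu22 : (inner ℝ u2 u2 : ℝ) = ‖u2‖ ^ 2 := real_inner_self_eq_norm_sq _
  have hu33 : (inner ℝ u3 u3 : ℝ) = ‖u3‖ ^ 2 := real_inner_self_eq_norm_sq _
  have hcomm : (inner ℝ g3 g2 : ℝ) = c := real_inner_comm _ _
  have e1 : (inner ℝ g2 w2 : ℝ) = inner ℝ g2 v2 + a2 * inner ℝ g2 u2 + a3 * inner ℝ g3 u3 * c := by
    rw [hw2]; simp only [inner_add_right, inner_sub_right, inner_smul_right, hgg2]; ring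
  have e2 : (inner ℝ g3 w3 : ℝ) = inner ℝ g3 v3 + a2 * inner ℝ g2 u2 * c + a3 * inner ℝ g3 u3 := by
    rw [hw3]; simp only [inner_add_right, inner_sub_right, inner_smul_right, hgg3, hcomm]; ring
  have e3 : (inner ℝ u2 w2 : ℝ) = inner ℝ u2 v2 + b2 * (‖u2‖ ^ 2 - inner ℝ g2 u2 ^ 2)
      + a2 * inner ℝ g2 u2 ^ 2 + a3 * inner ℝ g3 u3 * inner ℝ u2 g3 := by
    rw [hw2]; simp only [inner_add_right, inner_sub_right, inner_smul_right, hu22,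
      real_inner_comm g2 u2]; ring
  have e4 : (inner ℝ u3 w3 : ℝ) = inner ℝ u3 v3 + b3 * (‖u3‖ ^ 2 - inner ℝ g3 u3 ^ 2)
      + a2 * inner ℝ g2 u2 * inner ℝ u3 g2 + a3 * inner ℝ g3 u3 ^ 2 := by
    rw [hw3]; simp only [inner_add_right, inner_sub_right, inner_smul_right, hu33,
      real_inner_comm g3 u3]; ring
  have f1 : |inner ℝ g2 w2| ≤ ‖w2‖ := by simpa [hg2] using abs_real_inner_le_norm g2 w2
  have f2 : |inner ℝ g3 w3| ≤ ‖w3‖ := by simpa [hg3] using abs_real_inner_le_norm g3 w3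
  have f3 : |inner ℝ u2 w2| ≤ ‖u2‖ * ‖w2‖ := abs_real_inner_le_norm u2 w2
  have f4 : |inner ℝ u3 w3| ≤ ‖u3‖ * ‖w3‖ := abs_real_inner_le_norm u3 w3
  have f5 : |inner ℝ u2 g3| ≤ ‖u2‖ := by simpa [hg3] using abs_real_inner_le_norm u2 g3
  have f6 : |inner ℝ u3 g2| ≤ ‖u3‖ := by simpa [hg2] using abs_real_inner_le_norm u3 g2
  have f7 : |inner ℝ g2 u2| ≤ ‖u2‖ := by simpa [hg2] using abs_real_inner_le_norm g2 u2
  have f8 : |inner ℝ g3 u3| ≤ ‖u3‖ := by simpa [hg3] using abs_real_inner_le_norm g3 u3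
  have hn2 := norm_nonneg u2
  have hn3 := norm_nonneg u3
  have r1 : inner ℝ g2 u2 * inner ℝ g2 w2 ≤ ‖u2‖ * ‖w2‖ := by
    refine (le_abs_self _).trans ?_
    rw [abs_mul]; gcongr
  have r2 : inner ℝ g3 u3 * inner ℝ g3 w3 ≤ ‖u3‖ * ‖w3‖ := by
    refine (le_abs_self _).trans ?_
    rw [abs_mul]; gcongr
  have r3 := (le_abs_self _).trans f3
  have r4 := (le_abs_self _).trans f4
  have k5 : inner ℝ u2 g3 ^ 2 ≤ ‖u2‖ ^ 2 := sq_le_sq' (abs_le.1 f5).1 (abs_le.1 f5).2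
  have k6 : inner ℝ u3 g2 ^ 2 ≤ ‖u3‖ ^ 2 := sq_le_sq' (abs_le.1 f6).1 (abs_le.1 f6).2
  clear_value w2 w3
  generalize (inner ℝ g2 u2 : ℝ) = x2 at *
  generalize (inner ℝ g3 u3 : ℝ) = x3 at *
  generalize (inner ℝ g2 w2 : ℝ) = R1 at *
  generalize (inner ℝ g3 w3 : ℝ) = R2 at *
  generalize (inner ℝ u2 w2 : ℝ) = R3 at *
  generalize (inner ℝ u3 w3 : ℝ) = R4 at *
  generalize (inner ℝ u2 g3 : ℝ) = y2 at *
  generalize (inner ℝ u3 g2 : ℝ) = y3 at *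
  generalize (inner ℝ g2 v2 : ℝ) = V1 at *
  generalize (inner ℝ g3 v3 : ℝ) = V2 at *
  generalize (inner ℝ u2 v2 : ℝ) = V3 at *
  generalize (inner ℝ u3 v3 : ℝ) = V4 at *
  generalize ‖u2‖ = n2 at *
  generalize ‖u3‖ = n3 at *
  generalize ‖w2‖ = m2 at *
  generalize ‖w3‖ = m3 at *
  -- remainder
  have s1 : n2 * m2 + n3 * m3 ≤ 4 * η * (n2 ^ 2 + n3 ^ 2) := by
    have t1 : n2 * m2 ≤ n2 * (2 * η * (n2 + n3)) := by gcongr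
    have t2 : n3 * m3 ≤ n3 * (2 * η * (n2 + n3)) := by gcongr
    have t3 := mul_nonneg hη0.le (sq_nonneg (n2 - n3))
    linarith
  have hm2 : 0 ≤ n2 * m2 := by
    have : 0 ≤ m2 := (abs_nonneg _).trans f1
    positivity
  have hm3 : 0 ≤ n3 * m3 := by
    have : 0 ≤ m3 := (abs_nonneg _).trans f2
    positivity
  have s2 : a2 * (x2 * R1) + a3 * (x3 * R2) + ε * (R3 + R4) ≤ ε * β / 2 * (n2 ^ 2 + n3 ^ 2) := by
    have t1 : a2 * (x2 * R1) ≤ a2 * (n2 * m2) := by gcongr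
    have t2 : a3 * (x3 * R2) ≤ a3 * (n3 * m3) := by gcongr
    have t3 : ε * (R3 + R4) ≤ ε * (n2 * m2 + n3 * m3) := by gcongr
    have t4 : (a2 + a3 + ε) * (n2 * m2 + n3 * m3)
        ≤ (a2 + a3 + ε) * (4 * η * (n2 ^ 2 + n3 ^ 2)) := by gcongr
    have t5 : (a2 + a3 + ε) * (4 * η * (n2 ^ 2 + n3 ^ 2)) = ε * β / 2 * (n2 ^ 2 + n3 ^ 2) := by
      rw [← hη]; ring
    have t6 := mul_nonneg ha2.le hm3
    have t7 := mul_nonneg ha3.le hm2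
    clear s1
    linarith
  -- radial part
  have s3 : -(2 * c * (a2 * x2) * (a3 * x3)) ≤ |c| * ((a2 * x2) ^ 2 + (a3 * x3) ^ 2) := by
    have hcc := abs_le.1 (le_refl |c|)
    have t1 := mul_nonneg (by linarith [hcc.1] : 0 ≤ |c| + c) (sq_nonneg (a2 * x2 + a3 * x3))
    have t2 := mul_nonneg (by linarith [hcc.2] : 0 ≤ |c| - c) (sq_nonneg (a2 * x2 - a3 * x3))
    clear s1 s2 hε2 hε3
    linarith
  have s4 : -(a3 * x3 * y2) ≤ b2 / 2 * n2 ^ 2 + a3 ^ 2 / (2 * b2) * x3 ^ 2 := by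
    have q : a3 ^ 2 / (2 * b2) * x3 ^ 2 + a3 * x3 * y2 + b2 / 2 * y2 ^ 2
        = (a3 * x3 + b2 * y2) ^ 2 / (2 * b2) := by field_simp; ring
    have q' : 0 ≤ (a3 * x3 + b2 * y2) ^ 2 / (2 * b2) := by positivity
    have q'' := mul_le_mul_of_nonneg_left k5 (by positivity : 0 ≤ b2 / 2)
    linarith
  have s5 : -(a2 * x2 * y3) ≤ b3 / 2 * n3 ^ 2 + a2 ^ 2 / (2 * b3) * x2 ^ 2 := by
    have q : a2 ^ 2 / (2 * b3) * x2 ^ 2 + a2 * x2 * y3 + b3 / 2 * y3 ^ 2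
        = (a2 * x2 + b3 * y3) ^ 2 / (2 * b3) := by field_simp; ring
    have q' : 0 ≤ (a2 * x2 + b3 * y3) ^ 2 / (2 * b3) := by positivity
    have q'' := mul_le_mul_of_nonneg_left k6 (by positivity : 0 ≤ b3 / 2)
    linarith
  have hV1 : V1 = R1 - a2 * x2 - a3 * x3 * c := by linarith
  have hV2 : V2 = R2 - a2 * x2 * c - a3 * x3 := by linarith
  have s6 : V3 + V4 ≤ R3 + R4 - β * (n2 ^ 2 + n3 ^ 2) + (b2 + a2 ^ 2 / (2 * b3)) * x2 ^ 2
      + (b3 + a3 ^ 2 / (2 * b2)) * x3 ^ 2 := by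
    have q1 := mul_le_mul_of_nonneg_right hβ2 (sq_nonneg n2)
    have q2 := mul_le_mul_of_nonneg_right hβ3 (sq_nonneg n3)
    have q3 := mul_nonneg ha2.le (sq_nonneg x2)
    have q4 := mul_nonneg ha3.le (sq_nonneg x3)
    linarith
  have s7 := mul_le_mul_of_nonneg_left s6 hε.le
  have s8 := mul_le_mul_of_nonneg_right hε2 (sq_nonneg x2)
  have s9 := mul_le_mul_of_nonneg_right hε3 (sq_nonneg x3)
  rw [hV1, hV2]
  linarith
end

set_option maxHeartbeats 1000000 in
/-- local asymptotic convergence for the (1D2B) setup: if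
`d₁₂*, d₁₃* ≥ √3·(K_b/(2K_d))^(1/3)` and `g₁₂* ≠ ±g₁₃*`, then trajectories whose
initial links are close enough to the desired links converge to a formation
realizing the desired shape. -/
theorem stmt_11 (Kd Kb d12s d13s : ℝ) (hKd : 0 < Kd) (hKb : 0 < Kb)
    (hd12s : 0 < d12s) (hd13s : 0 < d13s)
    (g12s g13s : EuclideanSpace ℝ (Fin 2))
    (hg12s : ‖g12s‖ = 1) (hg13s : ‖g13s‖ = 1)
    (hne : g12s ≠ g13s) (hne' : g12s ≠ -g13s)
    (hthr12 : Real.sqrt 3 * (Kb / (2 * Kd)) ^ ((1 : ℝ) / 3) ≤ d12s)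
    (hthr13 : Real.sqrt 3 * (Kb / (2 * Kd)) ^ ((1 : ℝ) / 3) ≤ d13s) :
    ∃ δ : ℝ, 0 < δ ∧
      ∀ p₁ p₂ p₃ : ℝ → EuclideanSpace ℝ (Fin 2),
        (∀ t : ℝ, 0 ≤ t → p₁ t ≠ p₂ t) →
        (∀ t : ℝ, 0 ≤ t → p₁ t ≠ p₃ t) →
        (∀ t : ℝ, 0 ≤ t → HasDerivAt p₁
          ((Kd * (‖p₂ t - p₁ t‖ ^ 2 - d12s ^ 2)) • (p₂ t - p₁ t) +
           (Kd * (‖p₃ t - p₁ t‖ ^ 2 - d13s ^ 2)) • (p₃ t - p₁ t)) t) →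
        (∀ t : ℝ, 0 ≤ t → HasDerivAt p₂
          ((-Kb) • (‖p₂ t - p₁ t‖⁻¹ • (p₂ t - p₁ t) - g12s)) t) →
        (∀ t : ℝ, 0 ≤ t → HasDerivAt p₃
          ((-Kb) • (‖p₃ t - p₁ t‖⁻¹ • (p₃ t - p₁ t) - g13s)) t) →
        ‖(p₂ 0 - p₁ 0) - d12s • g12s‖ < δ →
        ‖(p₃ 0 - p₁ 0) - d13s • g13s‖ < δ →
        ∃ q₁ q₂ q₃ : EuclideanSpace ℝ (Fin 2),
          q₂ - q₁ = d12s • g12s ∧ q₃ - q₁ = d13s • g13s ∧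
          Filter.Tendsto p₁ Filter.atTop (nhds q₁) ∧
          Filter.Tendsto p₂ Filter.atTop (nhds q₂) ∧
          Filter.Tendsto p₃ Filter.atTop (nhds q₃) := by
  set a2 := 2 * Kd * d12s ^ 2 with ha2def
  set a3 := 2 * Kd * d13s ^ 2 with ha3def
  have ha2 : 0 < a2 := by positivity
  have ha3 : 0 < a3 := by positivity
  obtain ⟨ε, l, η, hε, hl, hη, hlyap⟩ := aux_lyap a2 a3 (Kb / d12s) (Kb / d13s) ha2 ha3
    (by positivity) (by positivity) g12s g13s hg12s hg13s hne hne'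
  obtain ⟨ρ1, hρ1, hF2⟩ := aux_F Kb d12s hd12s g12s hg12s η hη
  obtain ⟨ρ2, hρ2, hF3⟩ := aux_F Kb d13s hd13s g13s hg13s η hη
  obtain ⟨ρ3, hρ3, hG2⟩ := aux_G Kd d12s g12s hg12s η hη
  obtain ⟨ρ4, hρ4, hG3⟩ := aux_G Kd d13s g13s hg13s η hη
  obtain ⟨ρ, hρ, h1, h2, h3, h4⟩ : ∃ ρ : ℝ, 0 < ρ ∧ ρ ≤ ρ1 ∧ ρ ≤ ρ2 ∧ ρ ≤ ρ3 ∧ ρ ≤ ρ4 :=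
    ⟨min (min ρ1 ρ2) (min ρ3 ρ4), by positivity, by simp, by simp, by simp, by simp⟩
  set M := a2 + a3 + ε with hMdef
  have hM : 0 < M := by positivity
  set r := ε * (ρ ^ 2 / 2) with hrdef
  have hr : 0 < r := by positivity
  refine ⟨Real.sqrt (r / (2 * M)), by positivity, ?_⟩
  intro p₁ p₂ p₃ hp12 hp13 hp1' hp2' hp3' hi2 hi3
  -- errors
  set u2 : ℝ → EuclideanSpace ℝ (Fin 2) := fun t => p₂ t - p₁ t - d12s • g12s with hu2
  set u3 : ℝ → EuclideanSpace ℝ (Fin 2) := fun t => p₃ t - p₁ t - d13s • g13s with hu3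
  have hz2 : ∀ t, p₂ t - p₁ t = d12s • g12s + u2 t := fun t => by simp [hu2]
  have hz3 : ∀ t, p₃ t - p₁ t = d13s • g13s + u3 t := fun t => by simp [hu3]
  set G2 : ℝ → EuclideanSpace ℝ (Fin 2) := fun t => (Kd * (‖p₂ t - p₁ t‖ ^ 2 - d12s ^ 2)) • (p₂ t - p₁ t) with hG2def
  set G3 : ℝ → EuclideanSpace ℝ (Fin 2) := fun t => (Kd * (‖p₃ t - p₁ t‖ ^ 2 - d13s ^ 2)) • (p₃ t - p₁ t) with hG3def
  set F2 : ℝ → EuclideanSpace ℝ (Fin 2) := fun t => Kb • (‖p₂ t - p₁ t‖⁻¹ • (p₂ t - p₁ t) - g12s) with hF2def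
  set F3 : ℝ → EuclideanSpace ℝ (Fin 2) := fun t => Kb • (‖p₃ t - p₁ t‖⁻¹ • (p₃ t - p₁ t) - g13s) with hF3def
  have hp1 : ∀ t, 0 ≤ t → HasDerivAt p₁ (G2 t + G3 t) t := hp1'
  have du2 : ∀ t, 0 ≤ t → HasDerivAt u2 (-F2 t - (G2 t + G3 t)) t := by
    intro t ht
    have := ((hp2' t ht).sub (hp1 t ht)).sub_const (d12s • g12s)
    rw [neg_smul] at this
    exact this
  have du3 : ∀ t, 0 ≤ t → HasDerivAt u3 (-F3 t - (G2 t + G3 t)) t := by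
    intro t ht
    have := ((hp3' t ht).sub (hp1 t ht)).sub_const (d13s • g13s)
    rw [neg_smul] at this
    exact this
  have bF2 : ∀ t, ‖u2 t‖ < ρ → ‖F2 t - (Kb / d12s) • (u2 t - (inner ℝ g12s (u2 t)) • g12s)‖
      ≤ η * ‖u2 t‖ := fun t h => by
    have := hF2 (u2 t) (h.trans_le h1)
    rwa [← hz2] at this
  have bF3 : ∀ t, ‖u3 t‖ < ρ → ‖F3 t - (Kb / d13s) • (u3 t - (inner ℝ g13s (u3 t)) • g13s)‖
      ≤ η * ‖u3 t‖ := fun t h => by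
    have := hF3 (u3 t) (h.trans_le h2)
    rwa [← hz3] at this
  have bG2 : ∀ t, ‖u2 t‖ < ρ → ‖G2 t - (a2 * inner ℝ g12s (u2 t)) • g12s‖
      ≤ η * ‖u2 t‖ := fun t h => by
    have := hG2 (u2 t) (h.trans_le h3)
    rwa [← hz2] at this
  have bG3 : ∀ t, ‖u3 t‖ < ρ → ‖G3 t - (a3 * inner ℝ g13s (u3 t)) • g13s‖
      ≤ η * ‖u3 t‖ := fun t h => by
    have := hG3 (u3 t) (h.trans_le h4)
    rwa [← hz3] at this
  have i2 : ∀ t, |inner ℝ g12s (u2 t)| ≤ ‖u2 t‖ := fun t => by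
    simpa [hg12s] using abs_real_inner_le_norm g12s (u2 t)
  have i3 : ∀ t, |inner ℝ g13s (u3 t)| ≤ ‖u3 t‖ := fun t => by
    simpa [hg13s] using abs_real_inner_le_norm g13s (u3 t)
  -- Lyapunov function
  set W : ℝ → ℝ := fun t => a2 * (inner ℝ g12s (u2 t)) ^ 2 + a3 * (inner ℝ g13s (u3 t)) ^ 2
    + ε * (‖u2 t‖ ^ 2 + ‖u3 t‖ ^ 2) with hWdef
  have Wlow : ∀ t, ε * (‖u2 t‖ ^ 2 + ‖u3 t‖ ^ 2) ≤ W t := fun t => by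
    have : 0 ≤ a2 * (inner ℝ g12s (u2 t)) ^ 2 + a3 * (inner ℝ g13s (u3 t)) ^ 2 := by positivity
    simp only [hWdef]; linarith
  have Wup : ∀ t, W t ≤ M * (‖u2 t‖ ^ 2 + ‖u3 t‖ ^ 2) := fun t => by
    have k2 : (inner ℝ g12s (u2 t)) ^ 2 ≤ ‖u2 t‖ ^ 2 :=
      sq_le_sq' (abs_le.1 (i2 t)).1 (abs_le.1 (i2 t)).2
    have k3 : (inner ℝ g13s (u3 t)) ^ 2 ≤ ‖u3 t‖ ^ 2 :=
      sq_le_sq' (abs_le.1 (i3 t)).1 (abs_le.1 (i3 t)).2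
    have q2 := mul_le_mul_of_nonneg_left k2 ha2.le
    have q3 := mul_le_mul_of_nonneg_left k3 ha3.le
    have q4 := mul_nonneg ha2.le (sq_nonneg ‖u3 t‖)
    have q5 := mul_nonneg ha3.le (sq_nonneg ‖u2 t‖)
    simp only [hWdef, hMdef]; linarith
  have small : ∀ t, W t ≤ r → ‖u2 t‖ < ρ ∧ ‖u3 t‖ < ρ := by
    intro t ht
    have q := le_of_mul_le_mul_left ((Wlow t).trans ht) hε
    constructor
    · apply lt_of_pow_lt_pow_left₀ 2 hρ.le
      nlinarith [sq_nonneg ‖u3 t‖, pow_pos hρ 2]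
    · apply lt_of_pow_lt_pow_left₀ 2 hρ.le
      nlinarith [sq_nonneg ‖u2 t‖, pow_pos hρ 2]
  have W0 : W 0 ≤ r := by
    refine (Wup 0).trans ?_
    have j2 : ‖u2 0‖ ^ 2 ≤ r / (2 * M) := by
      rw [← Real.sq_sqrt (by positivity : 0 ≤ r / (2 * M))]
      exact pow_le_pow_left₀ (norm_nonneg _) hi2.le 2
    have j3 : ‖u3 0‖ ^ 2 ≤ r / (2 * M) := by
      rw [← Real.sq_sqrt (by positivity : 0 ≤ r / (2 * M))]
      exact pow_le_pow_left₀ (norm_nonneg _) hi3.le 2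
    calc M * (‖u2 0‖ ^ 2 + ‖u3 0‖ ^ 2) ≤ M * (r / (2 * M) + r / (2 * M)) := by gcongr
      _ = r := by field_simp; norm_num
  set W' : ℝ → ℝ := fun t => 2 * (a2 * (inner ℝ g12s (u2 t) *
        inner ℝ g12s (-F2 t - (G2 t + G3 t)))
      + a3 * (inner ℝ g13s (u3 t) * inner ℝ g13s (-F3 t - (G2 t + G3 t)))
      + ε * (inner ℝ (u2 t) (-F2 t - (G2 t + G3 t)) + inner ℝ (u3 t) (-F3 t - (G2 t + G3 t))))
    with hW'def
  have dW : ∀ t, 0 ≤ t → HasDerivAt W (W' t) t := by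
    intro t ht
    have A2 := ((innerSL ℝ g12s).hasFDerivAt.comp_hasDerivAt t (du2 t ht)).pow 2
    have A3 := ((innerSL ℝ g13s).hasFDerivAt.comp_hasDerivAt t (du3 t ht)).pow 2
    have N2 := (du2 t ht).norm_sq
    have N3 := (du3 t ht).norm_sq
    have := ((A2.const_mul a2).add (A3.const_mul a3)).add ((N2.add N3).const_mul ε)
    refine HasDerivAt.congr_deriv (f := W) this ?_
    simp [hW'def]
    ring
  have hdec : ∀ t, 0 ≤ t → W t ≤ r → W' t ≤ -(2 * (l / M)) * W t := by
    intro t _ hWt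
    obtain ⟨c2, c3⟩ := small t hWt
    have n2 := norm_nonneg (u2 t)
    have n3 := norm_nonneg (u3 t)
    have key := hlyap (u2 t) (u3 t) (-F2 t - (G2 t + G3 t)) (-F3 t - (G2 t + G3 t)) ?_ ?_
    · have q : l / M * W t ≤ l * (‖u2 t‖ ^ 2 + ‖u3 t‖ ^ 2) := by
        calc l / M * W t ≤ l / M * (M * (‖u2 t‖ ^ 2 + ‖u3 t‖ ^ 2)) := by gcongr; exact Wup t
          _ = _ := by field_simp
      simp only [hW'def]
      linarith
    · have e := norm_add₃_le (a := F2 t - (Kb / d12s) • (u2 t - (inner ℝ g12s (u2 t)) • g12s))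
        (b := G2 t - (a2 * inner ℝ g12s (u2 t)) • g12s)
        (c := G3 t - (a3 * inner ℝ g13s (u3 t)) • g13s)
      rw [← norm_neg] at e
      have e2 : ‖-F2 t - (G2 t + G3 t) + (Kb / d12s) • (u2 t - (inner ℝ g12s (u2 t)) • g12s)
        + (a2 * inner ℝ g12s (u2 t)) • g12s + (a3 * inner ℝ g13s (u3 t)) • g13s‖ =
        ‖-(F2 t - (Kb / d12s) • (u2 t - (inner ℝ g12s (u2 t)) • g12s) +
        (G2 t - (a2 * inner ℝ g12s (u2 t)) • g12s) +
        (G3 t - (a3 * inner ℝ g13s (u3 t)) • g13s))‖ := by congr 1; abel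
      rw [e2]
      nlinarith [bF2 t c2, bG2 t c2, bG3 t c3, mul_nonneg hη.le n3]
    · have e := norm_add₃_le (a := F3 t - (Kb / d13s) • (u3 t - (inner ℝ g13s (u3 t)) • g13s))
        (b := G2 t - (a2 * inner ℝ g12s (u2 t)) • g12s)
        (c := G3 t - (a3 * inner ℝ g13s (u3 t)) • g13s)
      rw [← norm_neg] at e
      have e2 : ‖-F3 t - (G2 t + G3 t) + (Kb / d13s) • (u3 t - (inner ℝ g13s (u3 t)) • g13s)
        + (a2 * inner ℝ g12s (u2 t)) • g12s + (a3 * inner ℝ g13s (u3 t)) • g13s‖ =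
        ‖-(F3 t - (Kb / d13s) • (u3 t - (inner ℝ g13s (u3 t)) • g13s) +
        (G2 t - (a2 * inner ℝ g12s (u2 t)) • g12s) +
        (G3 t - (a3 * inner ℝ g13s (u3 t)) • g13s))‖ := by congr 1; abel
      rw [e2]
      nlinarith [bF3 t c3, bG2 t c2, bG3 t c3, mul_nonneg hη.le n2]
  set k := l / M with hkdef
  have hk : 0 < k := by positivity
  have hexp := aux_decay W W' r k hr hk dW W0 hdec
  have Wr : ∀ t, 0 ≤ t → W t ≤ r := fun t ht => by
    refine (hexp t ht).trans ?_
    have : Real.exp (-k * t) ≤ 1 := Real.exp_le_one_iff.2 (by nlinarith)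
    nlinarith
  -- exponential bounds
  set C := Real.sqrt (r / ε) with hCdef
  have hC : 0 < C := by positivity
  have hCe : ∀ t, (C * Real.exp (-(k / 2) * t)) ^ 2 = r * Real.exp (-k * t) / ε := fun t => by
    rw [mul_pow, hCdef, Real.sq_sqrt (by positivity), ← Real.exp_nat_mul]
    rw [show ((2 : ℕ) : ℝ) * (-(k / 2) * t) = -k * t by push_cast; ring]
    ring
  have hN : ∀ t, 0 ≤ t → ‖u2 t‖ ^ 2 + ‖u3 t‖ ^ 2 ≤ (C * Real.exp (-(k / 2) * t)) ^ 2 := by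
    intro t ht
    rw [hCe, le_div_iff₀ hε, mul_comm]
    exact (Wlow t).trans (hexp t ht)
  have U2 : ∀ t, 0 ≤ t → ‖u2 t‖ ≤ C * Real.exp (-(k / 2) * t) := fun t ht =>
    abs_le_of_sq_le_sq' (by nlinarith [hN t ht, sq_nonneg ‖u3 t‖]) (by positivity) |>.2
  have U3 : ∀ t, 0 ≤ t → ‖u3 t‖ ≤ C * Real.exp (-(k / 2) * t) := fun t ht =>
    abs_le_of_sq_le_sq' (by nlinarith [hN t ht, sq_nonneg ‖u2 t‖]) (by positivity) |>.2
  have hexp0 : Tendsto (fun t : ℝ => C * Real.exp (-(k / 2) * t)) atTop (𝓝 0) := by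
    have : Tendsto (fun t : ℝ => -(k / 2) * t) atTop atBot :=
      tendsto_id.const_mul_atTop_of_neg (by linarith)
    simpa using (Real.tendsto_exp_atBot.comp this).const_mul C
  have T2 : Tendsto u2 atTop (𝓝 0) := squeeze_zero_norm'
    ((eventually_ge_atTop 0).mono fun t ht => U2 t ht) hexp0
  have T3 : Tendsto u3 atTop (𝓝 0) := squeeze_zero_norm'
    ((eventually_ge_atTop 0).mono fun t ht => U3 t ht) hexp0
  have BG : ∀ t, 0 ≤ t → ‖G2 t + G3 t‖ ≤
      (2 * η + a2 + a3) * (C * Real.exp (-(k / 2) * t)) := by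
    intro t ht
    obtain ⟨c2, c3⟩ := small t (Wr t ht)
    have q2 : ‖G2 t‖ ≤ (η + a2) * ‖u2 t‖ := by
      have e1 : ‖(a2 * inner ℝ g12s (u2 t)) • g12s‖ ≤ a2 * ‖u2 t‖ := by
        rw [norm_smul, hg12s, mul_one, norm_mul, Real.norm_of_nonneg ha2.le]
        exact mul_le_mul_of_nonneg_left (i2 t) ha2.le
      have e2 := norm_sub_norm_le (G2 t) ((a2 * inner ℝ g12s (u2 t)) • g12s)
      linarith [bG2 t c2]
    have q3 : ‖G3 t‖ ≤ (η + a3) * ‖u3 t‖ := by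
      have e1 : ‖(a3 * inner ℝ g13s (u3 t)) • g13s‖ ≤ a3 * ‖u3 t‖ := by
        rw [norm_smul, hg13s, mul_one, norm_mul, Real.norm_of_nonneg ha3.le]
        exact mul_le_mul_of_nonneg_left (i3 t) ha3.le
      have e2 := norm_sub_norm_le (G3 t) ((a3 * inner ℝ g13s (u3 t)) • g13s)
      linarith [bG3 t c3]
    have s2 := mul_le_mul_of_nonneg_left (U2 t ht) (by positivity : 0 ≤ η + a2)
    have s3 := mul_le_mul_of_nonneg_left (U3 t ht) (by positivity : 0 ≤ η + a3)
    linarith [norm_add_le (G2 t) (G3 t)]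
  have cp1 : ContinuousOn p₁ (Set.Ioi 0) := fun t ht =>
    (hp1 t (le_of_lt ht)).continuousAt.continuousWithinAt
  have cp2 : ContinuousOn p₂ (Set.Ioi 0) := fun t ht =>
    (hp2' t (le_of_lt ht)).continuousAt.continuousWithinAt
  have cp3 : ContinuousOn p₃ (Set.Ioi 0) := fun t ht =>
    (hp3' t (le_of_lt ht)).continuousAt.continuousWithinAt
  have cG : ContinuousOn (fun t => G2 t + G3 t) (Set.Ioi 0) := by
    simp only [hG2def, hG3def]
    fun_prop
  have hint : MeasureTheory.IntegrableOn (fun t => G2 t + G3 t) (Set.Ioi 0) := by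
    have hb : MeasureTheory.IntegrableOn
        (fun t : ℝ => (2 * η + a2 + a3) * (C * Real.exp (-(k / 2) * t))) (Set.Ioi 0) :=
      ((exp_neg_integrableOn_Ioi 0 (by positivity : 0 < k / 2)).const_mul C).const_mul _
    refine MeasureTheory.Integrable.mono' hb (cG.aestronglyMeasurable measurableSet_Ioi) ?_
    exact (MeasureTheory.ae_restrict_iff' measurableSet_Ioi).2
      (Eventually.of_forall fun t ht => BG t (le_of_lt ht))
  have L1 := MeasureTheory.tendsto_limUnder_of_hasDerivAt_of_integrableOn_Ioi (a := 0)
    (fun t ht => hp1 t (le_of_lt ht)) hint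
  set q := limUnder atTop p₁
  refine ⟨q, q + d12s • g12s, q + d13s • g13s, by simp, by simp, L1, ?_, ?_⟩
  · have := (L1.add_const (d12s • g12s)).add T2
    rw [add_zero] at this
    refine this.congr fun t => ?_
    simp only [hu2]; abel
  · have := (L1.add_const (d13s • g13s)).add T3
    rw [add_zero] at this
    refine this.congr fun t => ?_
    simp only [hu3]; abel
end
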